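/- There exists a universal constant C > 0 such that the following holds. Let d ≥ 1, T ≥ 1, α ∈ [1, 2], and η > 0 with ηT ≥ d, and let y_1,…,y_T ∈ {1,…,d}. Let c_{j,t} = #{s ≤ t : y_s = j} and define the FTRL predictions (p_t)_j = (c_{j,t−1} + 1/η)/(t − 1 + d/η) for t = 1,…,T+1. Then the stability term satisfies Σ_{t=1}^T (ℓ_α(p_t, y_t) − ℓ_α(p_{t+1}, y_t)) ≤ C α [ log(T + 1) + d^{2−α} ( log(ηT/d + 1) + η^{2−α} (log(ηT/d + 1))^{α−1} ) ]. -/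

import Mathlib

open scoped BigOperators

/-- The unscaled α-Tsallis loss: for `α ∈ (1, 2]`,
`ℓ_α(p, y) = (1/(1−α))(α p_y^{α−1} − 1) + ∑_j p_j^α`, and for `α = 1` it is the log loss
`ℓ_1(p, y) = −log p_y`. -/
noncomputable def tsallisLoss {d : ℕ} (α : ℝ) (p : Fin d → ℝ) (y : Fin d) : ℝ :=
  if α = 1 then -Real.log (p y)
  else (1 / (1 - α)) * (α * p y ^ (α - 1) - 1) + ∑ j, p j ^ α

/- The loss is the function `φ r = (1 - α * r ^ (α - 1)) / (α - 1)` of the probability `r` of the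
outcome, convex because `α ≤ 2`, plus the power sum `∑ j, p j ^ α`. If `α = 1`, take `φ r = -log r`;
the power sum is then constant. The power sums telescope, and they help: the initial prediction is
uniform, and the uniform distribution minimizes the power sum. For `φ`, a tangent line bound leaves
`α * p ^ (α - 2) * (q - p)`, where `p` and `q` are the predicted probabilities of the outcome before
and after it is observed. These are `x / N` and `(x + 1) / (N + 1)`, where `x` is the number of
earlier occurrences of the outcome plus `1 / η`, and `N` the number of earlier rounds plus `d / η`,
so the bound is at most `α * x⁻¹ ^ (2 - α) * (N + 1)⁻¹ ^ (α - 1)`. Hölder's inequality reduces the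
sum over the rounds to two harmonic sums. That of the `(N + 1)⁻¹` is logarithmic. That of the `x⁻¹`
splits into one harmonic sum for each outcome, and concavity of the logarithm shows that the worst
case is when all outcomes are equally frequent. -/

lemma inv_add_one_le_log_add_one_sub_log {x : ℝ} (hx : 0 < x) :
    (x + 1)⁻¹ ≤ Real.log (x + 1) - Real.log x := by
  have h := Real.one_sub_inv_le_log_of_pos (x := (x + 1) / x) (by positivity)
  rw [Real.log_div (by positivity) hx.ne'] at h
  have h_eq : 1 - ((x + 1) / x)⁻¹ = (x + 1)⁻¹ := by
    field_simp
    ring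
  rwa [h_eq] at h

lemma sum_range_inv_add_add_one_le_log {a : ℝ} (ha : 0 < a) (n : ℕ) :
    ∑ k ∈ Finset.range n, ((k : ℝ) + a + 1)⁻¹ ≤ Real.log (n / a + 1) := by
  calc ∑ k ∈ Finset.range n, ((k : ℝ) + a + 1)⁻¹
      ≤ ∑ k ∈ Finset.range n, (Real.log ((k + 1 : ℕ) + a) - Real.log (k + a)) := by
        refine Finset.sum_le_sum fun k _ ↦ ?_
        rw [Nat.cast_succ, add_right_comm _ 1]
        exact inv_add_one_le_log_add_one_sub_log (by positivity)
    _ = Real.log (n + a) - Real.log a := by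
        simpa using Finset.sum_range_sub (fun k : ℕ ↦ Real.log (k + a)) n
    _ = Real.log (n / a + 1) := by
        rw [← Real.log_div (by positivity) ha.ne', add_div, div_self ha.ne']

lemma sum_range_inv_add_le_inv_add_log {a : ℝ} (ha : 0 < a) (n : ℕ) :
    ∑ k ∈ Finset.range n, ((k : ℝ) + a)⁻¹ ≤ a⁻¹ + Real.log (n / a + 1) := by
  have h_telescope : ∑ k ∈ Finset.range n, (((k : ℝ) + a)⁻¹ - ((k : ℝ) + a + 1)⁻¹)
      = a⁻¹ - (n + a)⁻¹ := by
    simpa [add_right_comm] using Finset.sum_range_sub' (fun k : ℕ ↦ ((k : ℝ) + a)⁻¹) n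
  rw [Finset.sum_sub_distrib] at h_telescope
  have h_last : 0 ≤ ((n : ℝ) + a)⁻¹ := by positivity
  linarith [sum_range_inv_add_add_one_le_log ha n]

lemma sum_log_le_card_mul_log {ι : Type*} (s : Finset ι) {f : ι → ℝ} (hf : ∀ i ∈ s, 0 < f i) :
    ∑ i ∈ s, Real.log (f i) ≤ s.card * Real.log ((∑ i ∈ s, f i) / s.card) := by
  rcases s.eq_empty_or_nonempty with rfl | hs
  · simp
  have h_card : (0 : ℝ) < s.card := by exact_mod_cast hs.card_pos
  have h_jensen := strictConcaveOn_log_Ioi.concaveOn.le_map_sum (t := s)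
    (w := fun _ ↦ (s.card : ℝ)⁻¹) (p := f) (fun _ _ ↦ by positivity) (by simp [h_card.ne']) hf
  simp only [smul_eq_mul, ← Finset.mul_sum] at h_jensen
  rwa [inv_mul_le_iff₀ h_card, inv_mul_eq_div] at h_jensen

lemma sum_inv_card_rpow_le_sum_rpow {ι : Type*} [Fintype ι] {α : ℝ} (hα : 1 ≤ α) {p : ι → ℝ}
    (hp : ∀ i, 0 ≤ p i) (hp_sum : ∑ i, p i = 1) :
    ∑ _i : ι, (Fintype.card ι : ℝ)⁻¹ ^ α ≤ ∑ i, p i ^ α := by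
  have h_card : (0 : ℝ) < Fintype.card ι := by
    rcases isEmpty_or_nonempty ι
    · simp at hp_sum
    · exact_mod_cast Fintype.card_pos
  have h_mean := Real.rpow_arith_mean_le_arith_mean_rpow Finset.univ
    (fun _ : ι ↦ (Fintype.card ι : ℝ)⁻¹) p (fun _ _ ↦ by positivity) (by simp [h_card.ne'])
    (fun i _ ↦ hp i) hα
  rw [← Finset.mul_sum, ← Finset.mul_sum, hp_sum, mul_one, le_inv_mul_iff₀ h_card] at h_mean
  simpa using h_mean

lemma sum_rpow_mul_rpow_le {ι : Type*} (s : Finset ι) {u v : ι → ℝ} {θ θ' : ℝ} (hθ : 0 ≤ θ)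
    (hθ' : 0 ≤ θ') (hθθ' : θ + θ' = 1) (hu : ∀ i ∈ s, 0 ≤ u i) (hv : ∀ i ∈ s, 0 ≤ v i) :
    ∑ i ∈ s, u i ^ θ * v i ^ θ' ≤ (∑ i ∈ s, u i) ^ θ * (∑ i ∈ s, v i) ^ θ' := by
  rcases hθ.eq_or_lt with rfl | hθ_pos
  · obtain rfl : θ' = 1 := by simpa using hθθ'
    simp
  rcases hθ'.eq_or_lt with rfl | hθ'_pos
  · obtain rfl : θ = 1 := by simpa using hθθ'
    simp
  have h_holder := Real.inner_le_Lp_mul_Lq_of_nonneg s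
    (Real.HolderConjugate.inv_inv hθ_pos hθ'_pos hθθ')
    (fun i hi ↦ Real.rpow_nonneg (hu i hi) θ) (fun i hi ↦ Real.rpow_nonneg (hv i hi) θ')
  rwa [Finset.sum_congr rfl fun i hi ↦ Real.rpow_rpow_inv (hu i hi) hθ_pos.ne',
    Finset.sum_congr rfl fun i hi ↦ Real.rpow_rpow_inv (hv i hi) hθ'_pos.ne',
    one_div, one_div, inv_inv, inv_inv] at h_holder

lemma mul_add_rpow_mul_rpow_le {b c x θ θ' : ℝ} (hb : 0 ≤ b) (hc : 0 ≤ c) (hx : 0 ≤ x)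
    (hθ : 0 ≤ θ) (hθ' : 0 ≤ θ') (hθθ' : θ + θ' = 1) :
    (b * (c + x)) ^ θ * x ^ θ' ≤ b ^ θ * (x + c ^ θ * x ^ θ') := by
  have h_split : x ^ θ * x ^ θ' = x := by
    rw [← Real.rpow_add_of_nonneg hx hθ hθ', hθθ', Real.rpow_one]
  calc (b * (c + x)) ^ θ * x ^ θ'
      = b ^ θ * ((c + x) ^ θ * x ^ θ') := by rw [Real.mul_rpow hb (by positivity), mul_assoc]
    _ ≤ b ^ θ * ((c ^ θ + x ^ θ) * x ^ θ') := by
        gcongr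
        exact Real.rpow_add_le_add_rpow hc hx hθ (by linarith)
    _ = b ^ θ * (x + c ^ θ * x ^ θ') := by rw [add_mul, h_split, add_comm]

lemma rpow_sub_rpow_le_mul_sub {p q r : ℝ} (hr : 0 ≤ r) (hr' : r ≤ 1) (hp : 0 < p) (hq : 0 < q) :
    q ^ r - p ^ r ≤ r * p ^ (r - 1) * (q - p) := by
  have h_bernoulli : (q / p) ^ r ≤ 1 + r * (q / p - 1) := by
    simpa using rpow_one_add_le_one_add_mul_self (s := q / p - 1)
      (by linarith [div_pos hq hp]) hr hr'
  rw [Real.div_rpow hq.le hp.le, div_le_iff₀ (by positivity)] at h_bernoulli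
  calc q ^ r - p ^ r ≤ (1 + r * (q / p - 1)) * p ^ r - p ^ r := by gcongr
    _ = r * p ^ (r - 1) * (q - p) := by
        rw [Real.rpow_sub_one hp.ne']
        field_simp
        ring

lemma div_rpow_mul_sub_le {x N r : ℝ} (hx : 0 < x) (hN : 0 < N) (hr : r ≤ 2) :
    (x / N) ^ (r - 2) * ((x + 1) / (N + 1) - x / N) ≤ x⁻¹ ^ (2 - r) * (N + 1)⁻¹ ^ (r - 1) := by
  have h_sub : (x + 1) / (N + 1) - x / N ≤ (N + 1)⁻¹ := by
    have : x / (N + 1) ≤ x / N := by gcongr; linarith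
    rw [add_div, one_div]
    linarith
  have h_rpow : (x / N) ^ (r - 2) ≤ x⁻¹ ^ (2 - r) * (N + 1) ^ (2 - r) := by
    rw [← neg_sub 2 r, Real.rpow_neg (by positivity), ← Real.inv_rpow (by positivity), inv_div,
      ← Real.mul_rpow (by positivity) (by positivity), inv_mul_eq_div]
    gcongr
    linarith
  calc (x / N) ^ (r - 2) * ((x + 1) / (N + 1) - x / N)
      ≤ (x / N) ^ (r - 2) * (N + 1)⁻¹ := by gcongr
    _ ≤ x⁻¹ ^ (2 - r) * (N + 1) ^ (2 - r) * (N + 1)⁻¹ := by gcongr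
    _ = x⁻¹ ^ (2 - r) * (N + 1)⁻¹ ^ (r - 1) := by
        rw [mul_assoc, ← div_eq_mul_inv, ← Real.rpow_sub_one (by positivity),
          Real.inv_rpow (x := N + 1) (by positivity), ← Real.rpow_neg (by positivity),
          show 2 - r - 1 = -(r - 1) by ring]

lemma tsallisLoss_sub_le {d : ℕ} {α : ℝ} (hα : 1 ≤ α) (hα' : α ≤ 2) {p q : Fin d → ℝ} {y : Fin d}
    (hpq : ∑ j, p j = ∑ j, q j) (hp : 0 < p y) (hq : 0 < q y) :
    tsallisLoss α p y - tsallisLoss α q y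
      ≤ α * (p y ^ (α - 2) * (q y - p y)) + (∑ j, p j ^ α - ∑ j, q j ^ α) := by
  rcases hα.eq_or_lt with rfl | hα_lt
  · have h_log := Real.log_le_sub_one_of_pos (div_pos hq hp)
    rw [Real.log_div hq.ne' hp.ne'] at h_log
    have h_slope : p y ^ ((1 : ℝ) - 2) * (q y - p y) = q y / p y - 1 := by
      rw [show (1 : ℝ) - 2 = -1 by norm_num, Real.rpow_neg_one]
      field_simp
    simp only [tsallisLoss, if_true, Real.rpow_one, hpq, h_slope]
    linarith
  · have h_tangent := rpow_sub_rpow_le_mul_sub (r := α - 1) (by linarith) (by linarith) hp hq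
    rw [mul_assoc, show α - 1 - 1 = α - 2 by ring, ← div_le_iff₀' (by linarith)] at h_tangent
    calc tsallisLoss α p y - tsallisLoss α q y
        = α * ((q y ^ (α - 1) - p y ^ (α - 1)) / (α - 1)) + (∑ j, p j ^ α - ∑ j, q j ^ α) := by
          have h_ne : α - 1 ≠ 0 := by linarith
          simp only [tsallisLoss, if_neg hα_lt.ne', ← neg_sub α 1]
          field_simp
          ring
      _ ≤ α * (p y ^ (α - 2) * (q y - p y)) + (∑ j, p j ^ α - ∑ j, q j ^ α) := by gcongr

section AdditiveSmoothing

variable {ι : Type*} [Fintype ι] [DecidableEq ι]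

lemma sum_range_count_eq_sum_sum_range {M : Type*} [AddCommMonoid M] (y : ℕ → ι) (f : ℕ → M)
    (T : ℕ) :
    ∑ s ∈ Finset.range T, f (Nat.count (y · = y s) s)
      = ∑ j, ∑ k ∈ Finset.range (Nat.count (y · = j) T), f k := by
  induction T with
  | zero => simp
  | succ T ih =>
    have h_step : ∀ j, ∑ k ∈ Finset.range (Nat.count (y · = j) (T + 1)), f k
        = ∑ k ∈ Finset.range (Nat.count (y · = j) T), f k
          + if y T = j then f (Nat.count (y · = j) T) else 0 := by
      intro j
      rw [Nat.count_succ]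
      split_ifs
      · rw [Finset.sum_range_succ]
      · simp
    simp only [Finset.sum_range_succ, ih, h_step, Finset.sum_add_distrib, Finset.sum_ite_eq,
      Finset.mem_univ, if_true]

lemma sum_count_eq (y : ℕ → ι) (T : ℕ) : ∑ j, Nat.count (y · = j) T = T := by
  simpa only [Finset.sum_const, Finset.card_range, smul_eq_mul, mul_one] using
    (sum_range_count_eq_sum_sum_range y (fun _ ↦ (1 : ℕ)) T).symm

lemma sum_range_inv_count_add_le {a : ℝ} (ha : 0 < a) (y : ℕ → ι) (T : ℕ) :
    ∑ s ∈ Finset.range T, ((Nat.count (y · = y s) s : ℝ) + a)⁻¹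
      ≤ Fintype.card ι * (a⁻¹ + Real.log (T / (Fintype.card ι * a) + 1)) := by
  have h_card : (Fintype.card ι : ℝ) ≠ 0 := by
    exact_mod_cast (Fintype.card_pos_iff.mpr ⟨y 0⟩).ne'
  have h_mean : (∑ j, ((Nat.count (y · = j) T : ℝ) / a + 1)) / Fintype.card ι
      = T / (Fintype.card ι * a) + 1 := by
    rw [Finset.sum_add_distrib, ← Finset.sum_div, ← Nat.cast_sum, sum_count_eq]
    simp only [Finset.sum_const, Finset.card_univ, nsmul_eq_mul, mul_one]
    field_simp
  calc ∑ s ∈ Finset.range T, ((Nat.count (y · = y s) s : ℝ) + a)⁻¹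
      = ∑ j, ∑ k ∈ Finset.range (Nat.count (y · = j) T), ((k : ℝ) + a)⁻¹ :=
        sum_range_count_eq_sum_sum_range y (fun k ↦ ((k : ℝ) + a)⁻¹) T
    _ ≤ ∑ j, (a⁻¹ + Real.log (Nat.count (y · = j) T / a + 1)) :=
        Finset.sum_le_sum fun j _ ↦ sum_range_inv_add_le_inv_add_log ha _
    _ = Fintype.card ι * a⁻¹ + ∑ j, Real.log (Nat.count (y · = j) T / a + 1) := by
        simp [Finset.sum_add_distrib]
    _ ≤ Fintype.card ι * a⁻¹ + Fintype.card ι * Real.log (T / (Fintype.card ι * a) + 1) := by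
        rw [← h_mean]
        gcongr
        exact sum_log_le_card_mul_log Finset.univ fun j _ ↦ by positivity
    _ = Fintype.card ι * (a⁻¹ + Real.log (T / (Fintype.card ι * a) + 1)) := by ring

lemma sum_range_inv_count_rpow_mul_inv_rpow_le {a θ θ' : ℝ} (ha : 0 < a) (hθ : 0 ≤ θ)
    (hθ' : 0 ≤ θ') (hθθ' : θ + θ' = 1) (y : ℕ → ι) (T : ℕ) :
    ∑ s ∈ Finset.range T, ((Nat.count (y · = y s) s : ℝ) + a)⁻¹ ^ θ
        * ((s : ℝ) + Fintype.card ι * a + 1)⁻¹ ^ θ'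
      ≤ (Fintype.card ι : ℝ) ^ θ * (Real.log (T / (Fintype.card ι * a) + 1)
        + a⁻¹ ^ θ * Real.log (T / (Fintype.card ι * a) + 1) ^ θ') := by
  have h_card : (0 : ℝ) < Fintype.card ι := by exact_mod_cast Fintype.card_pos_iff.mpr ⟨y 0⟩
  set L := Real.log (T / (Fintype.card ι * a) + 1)
  have hL : 0 ≤ L := Real.log_nonneg (le_add_of_nonneg_left (by positivity))
  calc _ ≤ (∑ s ∈ Finset.range T, ((Nat.count (y · = y s) s : ℝ) + a)⁻¹) ^ θ
        * (∑ s ∈ Finset.range T, ((s : ℝ) + Fintype.card ι * a + 1)⁻¹) ^ θ' :=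
        sum_rpow_mul_rpow_le _ hθ hθ' hθθ' (fun _ _ ↦ by positivity) (fun _ _ ↦ by positivity)
    _ ≤ (Fintype.card ι * (a⁻¹ + L)) ^ θ * L ^ θ' := by
        gcongr
        · exact sum_range_inv_count_add_le ha y T
        · exact sum_range_inv_add_add_one_le_log (by positivity) T
    _ ≤ (Fintype.card ι : ℝ) ^ θ * (L + a⁻¹ ^ θ * L ^ θ') :=
        mul_add_rpow_mul_rpow_le h_card.le (by positivity) hL hθ hθ' hθθ'

/-- The additively smoothed empirical distribution of the first `t` outcomes `y 0, …, y (t - 1)`,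
with `a` pseudo-observations of each element of `ι`. The FTRL prediction `p_{t+1}` with learning
rate `η` is the case `a = 1 / η`. -/
noncomputable def additiveSmoothing (a : ℝ) (y : ℕ → ι) (t : ℕ) (j : ι) : ℝ :=
  ((Nat.count (y · = j) t : ℝ) + a) / (t + Fintype.card ι * a)

lemma additiveSmoothing_pos {a : ℝ} (ha : 0 < a) (y : ℕ → ι) (t : ℕ) (j : ι) :
    0 < additiveSmoothing a y t j := by
  have : (0 : ℝ) < Fintype.card ι := by exact_mod_cast Fintype.card_pos_iff.mpr ⟨j⟩
  unfold additiveSmoothing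
  positivity

lemma sum_additiveSmoothing {a : ℝ} (ha : 0 < a) (y : ℕ → ι) (t : ℕ) :
    ∑ j, additiveSmoothing a y t j = 1 := by
  have : (0 : ℝ) < Fintype.card ι := by exact_mod_cast Fintype.card_pos_iff.mpr ⟨y 0⟩
  have h_count : ∑ j, (Nat.count (y · = j) t : ℝ) = t := by exact_mod_cast sum_count_eq y t
  simp only [additiveSmoothing, ← Finset.sum_div, Finset.sum_add_distrib, h_count,
    Finset.sum_const, Finset.card_univ, nsmul_eq_mul]
  exact div_self (by positivity)

lemma additiveSmoothing_zero {a : ℝ} (ha : a ≠ 0) (y : ℕ → ι) (j : ι) :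
    additiveSmoothing a y 0 j = (Fintype.card ι : ℝ)⁻¹ := by
  simp [additiveSmoothing, div_mul_cancel_right₀ ha]

lemma additiveSmoothing_succ_self (a : ℝ) (y : ℕ → ι) (t : ℕ) :
    additiveSmoothing a y (t + 1) (y t)
      = ((Nat.count (y · = y t) t : ℝ) + a + 1) / (t + Fintype.card ι * a + 1) := by
  simp [additiveSmoothing, Nat.count_succ, add_right_comm]

end AdditiveSmoothing

lemma tsallisLoss_additiveSmoothing_sub_le {d : ℕ} {α a : ℝ} (hα : 1 ≤ α) (hα' : α ≤ 2)
    (ha : 0 < a) (y : ℕ → Fin d) (t : ℕ) :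
    tsallisLoss α (additiveSmoothing a y t) (y t)
        - tsallisLoss α (additiveSmoothing a y (t + 1)) (y t)
      ≤ α * (((Nat.count (y · = y t) t : ℝ) + a)⁻¹ ^ (2 - α)
          * ((t : ℝ) + d * a + 1)⁻¹ ^ (α - 1))
        + (∑ j, additiveSmoothing a y t j ^ α - ∑ j, additiveSmoothing a y (t + 1) j ^ α) := by
  have hd : (0 : ℝ) < d := by exact_mod_cast (y t).pos
  refine (tsallisLoss_sub_le hα hα' (by simp only [sum_additiveSmoothing ha])
    (additiveSmoothing_pos ha y t _) (additiveSmoothing_pos ha y (t + 1) _)).trans ?_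
  rw [additiveSmoothing_succ_self, additiveSmoothing, Fintype.card_fin]
  gcongr α * ?_ + _
  exact div_rpow_mul_sub_le (by positivity) (by positivity) hα'

lemma sum_tsallisLoss_additiveSmoothing_sub_le {d : ℕ} {α a : ℝ} (hα : 1 ≤ α) (hα' : α ≤ 2)
    (ha : 0 < a) (y : ℕ → Fin d) (T : ℕ) :
    ∑ s ∈ Finset.range T, (tsallisLoss α (additiveSmoothing a y s) (y s)
        - tsallisLoss α (additiveSmoothing a y (s + 1)) (y s))
      ≤ α * ((d : ℝ) ^ (2 - α) * (Real.log (T / (d * a) + 1)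
        + a⁻¹ ^ (2 - α) * Real.log (T / (d * a) + 1) ^ (α - 1))) := by
  have h_power_sum : ∑ j, additiveSmoothing a y 0 j ^ α ≤ ∑ j, additiveSmoothing a y T j ^ α := by
    simpa only [additiveSmoothing_zero ha.ne'] using sum_inv_card_rpow_le_sum_rpow hα
      (fun j ↦ (additiveSmoothing_pos ha y T j).le) (sum_additiveSmoothing ha y T)
  have h_weights := sum_range_inv_count_rpow_mul_inv_rpow_le (θ := 2 - α) (θ' := α - 1) ha
    (by linarith) (by linarith) (by ring) y T
  rw [Fintype.card_fin] at h_weights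
  have h_rounds := Finset.sum_le_sum fun s (_ : s ∈ Finset.range T) ↦
    tsallisLoss_additiveSmoothing_sub_le hα hα' ha y s
  rw [Finset.sum_add_distrib, ← Finset.mul_sum,
    Finset.sum_range_sub' (fun s ↦ ∑ j, additiveSmoothing a y s j ^ α)] at h_rounds
  linarith [mul_le_mul_of_nonneg_left h_weights (zero_le_one.trans hα)]

theorem stmt8_general {d T : ℕ} {α η : ℝ} (y : ℕ → Fin d) (p : ℕ → Fin d → ℝ) (hα : 1 ≤ α)
    (hα' : α ≤ 2) (hη : 0 < η)
    (hp : ∀ t ∈ Finset.Icc 1 (T + 1), ∀ j : Fin d,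
      p t j = ((((Finset.range (t - 1)).filter (fun s => y s = j)).card : ℝ) + 1 / η)
        / ((t : ℝ) - 1 + (d : ℝ) / η)) :
    ∑ s ∈ Finset.range T, (tsallisLoss α (p (s + 1)) (y s) - tsallisLoss α (p (s + 2)) (y s))
      ≤ α * ((d : ℝ) ^ (2 - α) * (Real.log (η * T / d + 1)
        + η ^ (2 - α) * Real.log (η * T / d + 1) ^ (α - 1))) := by
  have hp_smoothing : ∀ t ≤ T, p (t + 1) = additiveSmoothing η⁻¹ y t := by
    intro t ht
    ext j
    rw [hp (t + 1) (by simpa using ht) j]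
    simp [additiveSmoothing, Nat.count_eq_card_filter_range, div_eq_mul_inv]
  have h_ratio : (T : ℝ) / (d * η⁻¹) = η * T / d := by
    rw [← div_eq_mul_inv, div_div_eq_mul_div, mul_comm]
  have h_bound := sum_tsallisLoss_additiveSmoothing_sub_le hα hα' (inv_pos.mpr hη) y T
  rw [h_ratio, inv_inv] at h_bound
  refine (Finset.sum_congr rfl fun s hs ↦ ?_).trans_le h_bound
  rw [Finset.mem_range] at hs
  rw [hp_smoothing s hs.le, hp_smoothing (s + 1) hs]

/-- Lemma `stability-term-tsallis-loss`: bound on the stability term of FTRL with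
loss-based regularization for the unscaled α-Tsallis loss. Rounds are 1-based: `y s`
is the outcome of round `s+1`, `p t` (`t = 1, …, T+1`) are the FTRL predictions. -/
theorem stmt8 : ∃ C : ℝ, 0 < C ∧
    ∀ (d T : ℕ) (α η : ℝ) (y : ℕ → Fin d) (p : ℕ → Fin d → ℝ),
      1 ≤ d → 1 ≤ T → 1 ≤ α → α ≤ 2 → 0 < η → (d : ℝ) ≤ η * T →
      (∀ t ∈ Finset.Icc 1 (T + 1), ∀ j : Fin d,
          p t j = ((((Finset.range (t - 1)).filter (fun s => y s = j)).card : ℝ) + 1 / η)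
                    / ((t : ℝ) - 1 + (d : ℝ) / η)) →
      ∑ s ∈ Finset.range T, (tsallisLoss α (p (s + 1)) (y s) - tsallisLoss α (p (s + 2)) (y s))
        ≤ C * α * (Real.log ((T : ℝ) + 1)
            + (d : ℝ) ^ ((2 : ℝ) - α) * (Real.log (η * T / d + 1)
                + η ^ ((2 : ℝ) - α) * Real.log (η * T / d + 1) ^ (α - 1))) := by
  refine ⟨1, one_pos, fun d T α η y p _ _ hα hα' hη _ hp ↦
    (stmt8_general y p hα hα' hη hp).trans ?_⟩
  rw [one_mul]
  gcongr
  exact le_add_of_nonneg_left (Real.log_nonneg (by simp))
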